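/- Fix k ≥ 2 and let t be divisible by k, t sufficiently large. Let v = (t/k,...,t/k) and let A = A_{t,k,v} be the balanced-cut intersection matrix (columns indexed by k-subsets of [t], rows by partitions of [t] into k parts of size t/k, entry 1 iff the k-subset is a transversal). Then rank(A) = C(t,k) - t + 1. -/

import Mathlib

open scoped Classical

/-- Partitions of `[t]` into `k` parts of size `t/k` each. -/
def BalancedPartition (t k : ℕ) : Type :=
  {P : Finset (Finset (Fin t)) // P.card = k ∧ (∀ S ∈ P, S.card = t / k) ∧
    ∀ a : Fin t, ∃! S, S ∈ P ∧ a ∈ S}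

noncomputable instance (t k : ℕ) : Fintype (BalancedPartition t k) :=
  Subtype.fintype _

/-- The balanced-cut intersection matrix `A_{t,k,(t/k,…,t/k)}`: entry 1 iff the `k`-set is a
transversal of the partition. -/
noncomputable def cutMatrix (t k : ℕ) :
    Matrix (BalancedPartition t k) {S : Finset (Fin t) // S.card = k} ℚ :=
  fun P X => if ∀ S ∈ P.1, ((X : Finset (Fin t)) ∩ S).card = 1 then 1 else 0

/-!
The kernel of the matrix consists of the functions on `k`-sets of the form `X ↦ ∑ i ∈ X, a i`, where
`a` is a weight function on points of total weight `0`. Such functions form a space of dimension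
`t - 1`, and rank–nullity gives the rank.

Let `F` lie in the kernel, let the parts have size `n ≥ 3`, and fix `k - 2` parts of size `n`. The
other `2 * n` points are to be cut into two parts, and `F` sums to zero over the transversals for
each cut. Moving a point `u` and a point `w` across the cut shows that the effect of exchanging `u`
for `w` does not depend on the choice of the second point, once summed over the transversals of the
`k - 2` fixed parts. A function whose sums over the transversals of all such families vanish is
itself zero, provided the ground set has at least one point more than the parts occupy. Here the
ground set omits the four points involved in the exchanges, so it has `2 * n - 4 > 0` spare points.
Hence the mixed second differences of `F` vanish, so `F` is a sum of point weights up to a constant,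
which can be absorbed in the weights.
-/

namespace BalancedCut

open Finset

section Transversals

variable {α M : Type*} [DecidableEq α] [AddCommMonoid M] {P : Finset (Finset α)}
  {V X : Finset α}

/-- The transversals of a family `P` of sets: the subsets of the union of `P` meeting each member
in exactly one point. -/
def transversals (P : Finset (Finset α)) : Finset (Finset α) :=
  {X ∈ (P.biUnion id).powerset | ∀ V ∈ P, #(X ∩ V) = 1}

lemma mem_transversals :
    X ∈ transversals P ↔ X ⊆ P.biUnion id ∧ ∀ V ∈ P, #(X ∩ V) = 1 := by
  simp [transversals]

lemma transversals_empty : transversals (∅ : Finset (Finset α)) = {∅} := by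
  ext X
  simp [mem_transversals]

lemma card_of_mem_transversals (hP : (P : Set (Finset α)).PairwiseDisjoint id)
    (hX : X ∈ transversals P) : #X = #P := by
  obtain ⟨hXP, hX⟩ := mem_transversals.1 hX
  calc #X = #(P.biUnion fun V ↦ X ∩ V) := by
        rw [← inter_biUnion]
        exact congrArg card (inter_eq_left.2 hXP).symm
    _ = ∑ V ∈ P, #(X ∩ V) :=
        card_biUnion fun V hV W hW hVW ↦
          (hP hV hW hVW).mono inter_subset_right inter_subset_right
    _ = #P := by rw [sum_congr rfl hX, card_eq_sum_ones]

lemma insert_mem_transversals_insert (hVP : Disjoint V (P.biUnion id)) {v : α} (hv : v ∈ V)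
    {Y : Finset α} (hY : Y ∈ transversals P) : insert v Y ∈ transversals (insert V P) := by
  rw [mem_transversals] at hY ⊢
  have hYV : Disjoint Y V := hVP.symm.mono_left hY.1
  rw [biUnion_insert]
  refine ⟨insert_subset (mem_union_left _ hv) (hY.1.trans subset_union_right),
    forall_mem_insert _ _ _ |>.2 ⟨?_, fun W hW ↦ ?_⟩⟩
  · rw [insert_inter_of_mem hv, disjoint_iff_inter_eq_empty.1 hYV, insert_empty_eq,
      card_singleton]
  · have hvW : v ∉ W := disjoint_left.1 ((disjoint_biUnion_right _ _ _).1 hVP W hW) hv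
    rw [insert_inter_of_notMem hvW, hY.2 W hW]

lemma exists_insert_eq_of_mem_transversals_insert (hVP : Disjoint V (P.biUnion id))
    (hX : X ∈ transversals (insert V P)) : ∃ v ∈ V, ∃ Y ∈ transversals P, insert v Y = X := by
  rw [mem_transversals, biUnion_insert] at hX
  obtain ⟨hXVP, hX⟩ := hX
  obtain ⟨v, hv⟩ := card_eq_one.1 (hX V (mem_insert_self V P))
  have hvXV : v ∈ X ∩ V := hv ▸ mem_singleton_self v
  refine ⟨v, (mem_inter.1 hvXV).2, X \ V, mem_transversals.2
    ⟨sdiff_le_iff.2 hXVP, fun W hW ↦ ?_⟩, ?_⟩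
  · have hVW : Disjoint V W := (disjoint_biUnion_right _ _ _).1 hVP W hW
    rw [inter_comm, ← inter_sdiff_assoc, sdiff_eq_self_of_disjoint
      (hVW.symm.mono_left inter_subset_left), inter_comm, hX W (mem_insert_of_mem hW)]
  · rw [insert_eq, ← hv, union_comm, sdiff_union_inter]

lemma sum_transversals_insert (hVP : Disjoint V (P.biUnion id)) (F : Finset α → M) :
    ∑ X ∈ transversals (insert V P), F X = ∑ v ∈ V, ∑ Y ∈ transversals P, F (insert v Y) := by
  have hdisj : ∀ Y ∈ transversals P, Disjoint Y V := fun Y hY ↦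
    hVP.symm.mono_left (mem_transversals.1 hY).1
  rw [← sum_product']
  symm
  refine sum_nbij (fun p ↦ insert p.1 p.2) ?_ ?_ ?_ fun _ _ ↦ rfl
  · rintro ⟨v, Y⟩ hp
    obtain ⟨hv, hY⟩ := mem_product.1 hp
    exact insert_mem_transversals_insert hVP hv hY
  · rintro ⟨v, Y⟩ hp ⟨w, Z⟩ hq (h : insert v Y = insert w Z)
    obtain ⟨hv, hY⟩ := mem_product.1 hp
    obtain ⟨hw, hZ⟩ := mem_product.1 hq
    have hvw : v = w := by
      simpa [insert_inter_of_mem hv, insert_inter_of_mem hw,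
        disjoint_iff_inter_eq_empty.1 (hdisj Y hY), disjoint_iff_inter_eq_empty.1 (hdisj Z hZ)]
        using congrArg (· ∩ V) h
    have hYZ : Y = Z := by
      simpa [insert_sdiff_of_mem _ hv, insert_sdiff_of_mem _ hw,
        sdiff_eq_self_of_disjoint (hdisj Y hY), sdiff_eq_self_of_disjoint (hdisj Z hZ)]
        using congrArg (· \ V) h
    rw [hvw, hYZ]
  · intro X hX
    obtain ⟨v, hv, Y, hY, rfl⟩ := exists_insert_eq_of_mem_transversals_insert hVP hX
    exact ⟨(v, Y), mem_product.2 ⟨hv, hY⟩, rfl⟩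

lemma card_transversals (hP : (P : Set (Finset α)).PairwiseDisjoint id) :
    #(transversals P) = ∏ V ∈ P, #V := by
  induction P using Finset.induction_on with
  | empty => simp [transversals_empty]
  | insert V P hV ih =>
    rw [coe_insert, Set.pairwiseDisjoint_insert_of_notMem hV] at hP
    have hVP : Disjoint V (P.biUnion id) := (disjoint_biUnion_right _ _ _).2 hP.2
    rw [card_eq_sum_ones, sum_transversals_insert hVP, prod_insert hV, ← ih hP.1]
    simp

lemma sum_transversals_sum {R : Type*} [CommSemiring R]
    (hP : (P : Set (Finset α)).PairwiseDisjoint id) {n : ℕ} (hn : ∀ V ∈ P, #V = n) (a : α → R) :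
    n * ∑ X ∈ transversals P, ∑ i ∈ X, a i = n ^ #P * ∑ i ∈ P.biUnion id, a i := by
  induction P using Finset.induction_on with
  | empty => simp [transversals_empty]
  | insert V P hV ih =>
    rw [coe_insert, Set.pairwiseDisjoint_insert_of_notMem hV] at hP
    rw [forall_mem_insert] at hn
    have hVP : Disjoint V (P.biUnion id) := (disjoint_biUnion_right _ _ _).2 hP.2
    have hsum : ∀ v ∈ V, ∑ Y ∈ transversals P, ∑ i ∈ insert v Y, a i =
        n ^ #P * a v + ∑ Y ∈ transversals P, ∑ i ∈ Y, a i := fun v hv ↦ by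
      have hvY : ∀ Y ∈ transversals P, v ∉ Y := fun Y hY hvY ↦
        disjoint_left.1 hVP hv ((mem_transversals.1 hY).1 hvY)
      rw [sum_congr rfl fun Y hY ↦ sum_insert (hvY Y hY), sum_add_distrib, sum_const,
        card_transversals hP.1, prod_congr rfl hn.2, prod_const, nsmul_eq_mul, Nat.cast_pow]
    rw [sum_transversals_insert hVP, sum_congr rfl hsum, sum_add_distrib, ← mul_sum, sum_const,
      hn.1, nsmul_eq_mul, mul_add, ih hP.1 hn.2, biUnion_insert, id, sum_union hVP,
      card_insert_of_notMem hV]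
    ring

end Transversals

section Packings

variable {α : Type*} [DecidableEq α] {E E' V : Finset α} {j n : ℕ}
  {P : Finset (Finset α)}

/-- `P` consists of `j` pairwise disjoint `n`-element subsets of `E`. When `#E = j * n` this is a
partition of `E` into parts of size `n`. -/
structure IsPacking (E : Finset α) (j n : ℕ) (P : Finset (Finset α)) : Prop where
  card_eq : #P = j
  card_of_mem : ∀ V ∈ P, #V = n
  pairwiseDisjoint : (P : Set (Finset α)).PairwiseDisjoint id
  biUnion_subset : P.biUnion id ⊆ E

namespace IsPacking

lemma empty (E : Finset α) (n : ℕ) : IsPacking E 0 n ∅ where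
  card_eq := card_empty
  card_of_mem := by simp
  pairwiseDisjoint := by simp
  biUnion_subset := by simp

lemma mono (hP : IsPacking E j n P) (hE : E ⊆ E') : IsPacking E' j n P :=
  { hP with biUnion_subset := hP.biUnion_subset.trans hE }

lemma insert (hP : IsPacking E j n P) (hn : 0 < n) (hVE : V ⊆ E \ P.biUnion id) (hV : #V = n) :
    IsPacking E (j + 1) n (insert V P) := by
  have hVP : Disjoint V (P.biUnion id) := disjoint_of_subset_left hVE sdiff_disjoint
  have hdisj : ∀ W ∈ P, Disjoint V W := (disjoint_biUnion_right _ _ _).1 hVP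
  have hmem : V ∉ P := fun h ↦ by
    rw [(disjoint_self_iff_empty V).1 (hdisj V h), card_empty] at hV
    exact hn.ne hV
  exact
    { card_eq := by rw [card_insert_of_notMem hmem, hP.card_eq]
      card_of_mem := (forall_mem_insert _ _ _).2 ⟨hV, hP.card_of_mem⟩
      pairwiseDisjoint := by
        rw [coe_insert]
        exact hP.pairwiseDisjoint.insert fun W hW _ ↦ hdisj W hW
      biUnion_subset := by
        rw [biUnion_insert]
        exact union_subset (hVE.trans sdiff_subset) hP.biUnion_subset }

lemma card_biUnion (hP : IsPacking E j n P) : #(P.biUnion id) = j * n := by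
  rw [Finset.card_biUnion hP.pairwiseDisjoint, ← hP.card_eq]
  exact sum_const_nat hP.card_of_mem

lemma biUnion_eq (hP : IsPacking E j n P) (hE : #E = j * n) : P.biUnion id = E :=
  eq_of_subset_of_card_le hP.biUnion_subset (by rw [hP.card_biUnion, hE])

lemma card_sdiff_biUnion (hP : IsPacking E j n P) : #(E \ P.biUnion id) = #E - j * n := by
  rw [card_sdiff_of_subset hP.biUnion_subset, hP.card_biUnion]

end IsPacking

lemma exists_isPacking (hn : 0 < n) (h : j * n ≤ #E) : ∃ P, IsPacking E j n P := by
  induction j with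
  | zero => exact ⟨∅, .empty E n⟩
  | succ j ih =>
    rw [Nat.succ_mul] at h
    obtain ⟨P, hP⟩ := ih (by lia)
    obtain ⟨V, hVE, hV⟩ := exists_subset_card_eq
      (show n ≤ #(E \ P.biUnion id) by rw [hP.card_sdiff_biUnion]; lia)
    exact ⟨insert V P, hP.insert hn hVE hV⟩

end Packings

section EqualSums

variable {α M : Type*} [AddCommGroup M] {W : Finset α} {n : ℕ} {g : α → M} {x y : α}

lemma eq_of_sum_eq_of_card_eq (hn : 0 < n) (hW : n < #W) {c : M}
    (h : ∀ V ⊆ W, #V = n → ∑ v ∈ V, g v = c) (hx : x ∈ W) (hy : y ∈ W) : g x = g y := by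
  obtain rfl | hxy := eq_or_ne x y
  · rfl
  obtain ⟨S, hS, hSn⟩ := exists_subset_card_eq (show n - 1 ≤ #(W \ {x, y}) by
    rw [card_sdiff_of_subset (insert_subset hx (singleton_subset_iff.2 hy)), card_pair hxy]
    lia)
  have hSW : S ⊆ W := hS.trans sdiff_subset
  have hxS : x ∉ S := fun h ↦ by simpa using hS h
  have hyS : y ∉ S := fun h ↦ by simpa using hS h
  have hsum : ∀ z ∈ W, z ∉ S → g z + ∑ v ∈ S, g v = c := fun z hz hzS ↦ by
    rw [← sum_insert hzS]
    exact h _ (insert_subset hz hSW) (by rw [card_insert_of_notMem hzS]; lia)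
  exact add_right_cancel ((hsum x hx hxS).trans (hsum y hy hyS).symm)

lemma eq_zero_of_sum_eq_zero_of_card_eq [IsAddTorsionFree M] (hn : 0 < n) (hW : n < #W)
    (h : ∀ V ⊆ W, #V = n → ∑ v ∈ V, g v = 0) (hx : x ∈ W) : g x = 0 := by
  obtain ⟨V, hVW, hV⟩ := exists_subset_card_eq hW.le
  have hsum := h V hVW hV
  rw [sum_congr rfl fun y hy ↦ eq_of_sum_eq_of_card_eq hn hW h (hVW hy) hx, sum_const, hV] at hsum
  exact nsmul_right_injective hn.ne' (hsum.trans (nsmul_zero n).symm)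

end EqualSums

section Vanishing

variable {α M : Type*} [DecidableEq α] [AddCommGroup M] {n j k : ℕ} {E V : Finset α}
  {P : Finset (Finset α)} {F : Finset α → M}

lemma eq_zero_of_sum_transversals_eq_zero [IsAddTorsionFree M] (hn : 0 < n) (hE : j * n < #E)
    (hF : ∀ P, IsPacking E j n P → ∑ X ∈ transversals P, F X = 0) {Y : Finset α} (hYE : Y ⊆ E)
    (hY : #Y = j) : F Y = 0 := by
  induction j generalizing E F Y with
  | zero =>
    rw [card_eq_zero.1 hY]
    simpa [transversals_empty] using hF ∅ (.empty E n)
  | succ j ih =>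
    obtain ⟨e, Y, heY, rfl, hYj⟩ := card_eq_succ.1 hY
    rw [insert_subset_iff] at hYE
    rw [Nat.succ_mul] at hE
    refine ih (E := E.erase e) (F := fun Z ↦ F (insert e Z)) ?_ (fun P hP ↦ ?_)
      (subset_erase.2 ⟨hYE.2, heY⟩) hYj
    · rw [card_erase_of_mem hYE.1]
      lia
    · have hPE : IsPacking E j n P := hP.mono (erase_subset e E)
      have heP : e ∈ E \ P.biUnion id :=
        mem_sdiff.2 ⟨hYE.1, fun he ↦ notMem_erase e E (hP.biUnion_subset he)⟩
      refine eq_zero_of_sum_eq_zero_of_card_eq (g := fun x ↦ ∑ Z ∈ transversals P, F (insert x Z))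
        hn (by rw [hPE.card_sdiff_biUnion]; lia) (fun V hVE hV ↦ ?_) heP
      rw [← sum_transversals_insert (disjoint_of_subset_left hVE sdiff_disjoint)]
      exact hF _ (hPE.insert hn hVE hV)

lemma sum_cut_eq_zero (hn : 0 < n) (hE : #E = (j + 2) * n)
    (hF : ∀ P, IsPacking E (j + 2) n P → ∑ X ∈ transversals P, F X = 0) (hP : IsPacking E j n P)
    (hV : V ⊆ E \ P.biUnion id) (hVn : #V = n) :
    ∑ x ∈ V, ∑ y ∈ (E \ P.biUnion id) \ V, ∑ Z ∈ transversals P, F (insert x (insert y Z)) = 0 := by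
  set W := (E \ P.biUnion id) \ V
  have hWn : #W = n := by
    rw [card_sdiff_of_subset hV, hP.card_sdiff_biUnion, hE, hVn, Nat.add_mul]
    lia
  have hWP : Disjoint W (P.biUnion id) := sdiff_disjoint.mono_left sdiff_subset
  have hVWP : V ⊆ E \ (insert W P).biUnion id := by
    rw [biUnion_insert, id]
    exact subset_sdiff.2 ⟨hV.trans sdiff_subset,
      disjoint_union_right.2 ⟨disjoint_sdiff, disjoint_of_subset_left hV sdiff_disjoint⟩⟩
  have hsum := hF _ ((hP.insert hn sdiff_subset hWn).insert hn hVWP hVn)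
  rw [sum_transversals_insert (disjoint_of_subset_left hVWP sdiff_disjoint)] at hsum
  simpa only [sum_transversals_insert hWP] using hsum

/- Moving `u` and `w` across the cut shows that `x ↦ G u x - G w x` has the same sum over both
halves of every equipartition of `A \ {u, w}`. -/
lemma sub_eq_sub_of_sum_cut_eq_zero [IsAddTorsionFree M] {A : Finset α} (hA : #A = 2 * n)
    {G : α → α → M} (hG : ∀ x y, G x y = G y x)
    (h : ∀ V ⊆ A, #V = n → ∑ x ∈ V, ∑ y ∈ A \ V, G x y = 0) {u w a b : α} (hu : u ∈ A) (hw : w ∈ A)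
    (huw : u ≠ w) (ha : a ∈ A \ {u, w}) (hb : b ∈ A \ {u, w}) :
    G u a - G w a = G u b - G w b := by
  set B := A \ {u, w} with hB
  have hBcard : #B = 2 * n - 2 := by
    rw [card_sdiff_of_subset (insert_subset hu (singleton_subset_iff.2 hw)), card_pair huw, hA]
  have hBpos : 0 < #B := card_pos.2 ⟨a, ha⟩
  have hcut : ∀ S ⊆ B, #S = n - 1 → ∀ x ∈ A, ∀ y ∈ A, x ≠ y → ({x, y} : Finset α) = {u, w} →
      G x y + ∑ s ∈ B \ S, G x s + (∑ s ∈ S, G y s + ∑ s ∈ S, ∑ r ∈ B \ S, G s r) = 0 := by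
    intro S hS hSn x hx y hy hxy hset
    have hxS : x ∉ S := fun hxS ↦ by simpa [hB, ← hset] using hS hxS
    have hyS : y ∉ S := fun hyS ↦ by simpa [hB, ← hset] using hS hyS
    have hyB : y ∉ B \ S := fun hyB ↦ by simp [hB, ← hset] at hyB
    have hcompl : A \ insert x S = insert y (B \ S) := by
      have hyxS : y ∈ A \ insert x S := mem_sdiff.2 ⟨hy, by simp [hxy.symm, hyS]⟩
      rw [← insert_erase hyxS, hB, ← hset]
      grind
    have := h (insert x S) (insert_subset hx (hS.trans sdiff_subset))
      (by rw [card_insert_of_notMem hxS]; lia)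
    rw [hcompl] at this
    simpa only [sum_insert hxS, sum_insert hyB, sum_add_distrib, hG _ y] using this
  have hhalf : ∀ S ⊆ B, #S = n - 1 →
      ∑ s ∈ S, 2 • (G u s - G w s) = ∑ s ∈ B, (G u s - G w s) := by
    intro S hS hSn
    have huwS := hcut S hS hSn u hu w hw huw rfl
    have hwuS := hcut S hS hSn w hw u hu huw.symm (pair_comm w u)
    have hswap : ∑ s ∈ S, (G u s - G w s) = ∑ s ∈ B \ S, (G u s - G w s) := by
      rw [hG w u] at hwuS
      simp only [sum_sub_distrib]
      grind
    rw [sum_nsmul, two_nsmul, ← sum_sdiff hS, hswap]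
  exact nsmul_right_injective two_ne_zero
    (eq_of_sum_eq_of_card_eq (g := fun x ↦ 2 • (G u x - G w x)) (by lia) (by lia) hhalf ha hb)

end Vanishing

section MixedDifferences

variable {α M : Type*} [DecidableEq α] [AddCommGroup M] {k : ℕ} {F : Finset α → M}

/-- The mixed second differences of `F` on the `k`-element sets vanish: the effect on `F` of
exchanging `u` for `w` in a `k`-set does not change when another element `a` of the set is
exchanged for `b`. -/
def MixedDifferencesVanish (k : ℕ) (F : Finset α → M) : Prop :=
  ∀ ⦃u w a b : α⦄ ⦃Y : Finset α⦄, #Y + 2 = k → u ≠ w → a ∉ ({u, w} : Finset α) →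
    b ∉ ({u, w} : Finset α) → Disjoint Y {u, w, a, b} →
    F (insert u (insert a Y)) - F (insert w (insert a Y)) =
      F (insert u (insert b Y)) - F (insert w (insert b Y))

lemma mixedDifferencesVanish_of_sum_transversals_eq_zero [Fintype α] [IsAddTorsionFree M] {n : ℕ}
    (hn : 3 ≤ n) (hα : Fintype.card α = k * n)
    (hF : ∀ P, IsPacking univ k n P → ∑ X ∈ transversals P, F X = 0) :
    MixedDifferencesVanish k F := by
  rintro u w a b Y rfl huw ha hb hY
  rw [← sub_eq_zero]
  refine eq_zero_of_sum_transversals_eq_zero (n := n) (E := univ \ {u, w, a, b})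
    (F := fun Y ↦ F (insert u (insert a Y)) - F (insert w (insert a Y)) -
      (F (insert u (insert b Y)) - F (insert w (insert b Y)))) (by lia) ?_ (fun P hP ↦ ?_)
    (subset_sdiff.2 ⟨subset_univ Y, hY⟩) rfl
  · calc #Y * n < (#Y + 2) * n - 4 := by rw [Nat.add_mul]; lia
      _ ≤ #univ - #{u, w, a, b} := by rw [card_univ, hα]; exact Nat.sub_le_sub_left card_le_four _
      _ ≤ #(univ \ {u, w, a, b}) := le_card_sdiff _ _
  have hPuniv : IsPacking univ #Y n P := hP.mono (subset_univ _)
  have hmem : ∀ x ∈ ({u, w, a, b} : Finset α), x ∈ univ \ P.biUnion id := fun x hx ↦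
    mem_sdiff.2 ⟨mem_univ x, fun hxP ↦ (mem_sdiff.1 (hP.biUnion_subset hxP)).2 hx⟩
  have hcard : #(univ \ P.biUnion id) = 2 * n := by
    rw [hPuniv.card_sdiff_biUnion, card_univ, hα, Nat.add_mul, Nat.add_sub_cancel_left]
  have hswap := sub_eq_sub_of_sum_cut_eq_zero hcard
    (G := fun x y ↦ ∑ Z ∈ transversals P, F (insert x (insert y Z)))
    (fun x y ↦ by simp only [insert_comm x y])
    (fun V hVP hV ↦ sum_cut_eq_zero (by lia) hα hF hPuniv hVP hV) (hmem u (by simp))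
    (hmem w (by simp)) huw (mem_sdiff.2 ⟨hmem a (by simp), ha⟩)
    (mem_sdiff.2 ⟨hmem b (by simp), hb⟩)
  simpa only [sum_sub_distrib, sub_eq_zero] using hswap

lemma eq_of_forall_insert_eq_insert {β : Type*} {D : Finset α} {j : ℕ} {φ : Finset α → β}
    (h : ∀ Y ⊆ D, #Y + 1 = j → ∀ a ∈ D \ Y, ∀ b ∈ D \ Y, φ (insert a Y) = φ (insert b Y))
    {X Z : Finset α} (hXD : X ⊆ D) (hZD : Z ⊆ D) (hX : #X = j) (hZ : #Z = j) : φ X = φ Z := by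
  induction hN : #(X \ Z) generalizing X with
  | zero =>
    rw [card_eq_zero, sdiff_eq_empty_iff_subset] at hN
    rw [eq_of_subset_of_card_le hN (by lia)]
  | succ N ih =>
    obtain ⟨a, ha⟩ := card_pos.1 (show 0 < #(X \ Z) by lia)
    obtain ⟨b, hb⟩ := card_pos.1
      (show 0 < #(Z \ X) by rw [card_sdiff_comm (hZ.trans hX.symm)]; lia)
    rw [mem_sdiff] at ha hb
    have hbX : b ∉ X.erase a := fun hbX ↦ hb.2 (mem_of_mem_erase hbX)
    have herase : X.erase a ⊆ D := (erase_subset a X).trans hXD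
    have hcard : #(X.erase a) + 1 = j := by rw [card_erase_add_one ha.1, hX]
    have hdiff : insert b (X.erase a) \ Z = (X \ Z).erase a := by
      rw [insert_sdiff_of_mem _ hb.1, erase_sdiff_comm]
    calc φ X = φ (insert a (X.erase a)) := by rw [insert_erase ha.1]
      _ = φ (insert b (X.erase a)) :=
        h _ herase hcard a (mem_sdiff.2 ⟨hXD ha.1, notMem_erase a X⟩) b
          (mem_sdiff.2 ⟨hZD hb.1, hbX⟩)
      _ = φ Z := ih (insert_subset (hZD hb.1) herase)
        (by rw [card_insert_of_notMem hbX, hcard])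
        (by rw [hdiff, card_erase_of_mem (mem_sdiff.2 ha), hN, Nat.add_sub_cancel])

lemma exists_disjoint_card_eq {β : Type*} [Fintype β] {B : Finset β} {j : ℕ}
    (h : j + #B ≤ Fintype.card β) : ∃ Z, Disjoint Z B ∧ #Z = j := by
  classical
  obtain ⟨Z, hZB, hZ⟩ := exists_subset_card_eq (show j ≤ #Bᶜ by rw [card_compl]; lia)
  exact ⟨Z, subset_compl_iff_disjoint_right.1 hZB, hZ⟩

namespace MixedDifferencesVanish

lemma sub_eq_sub (h : MixedDifferencesVanish k F) {u w : α} {Y Z : Finset α} (hY : #Y + 1 = k)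
    (hZ : #Z + 1 = k) (hYuw : Disjoint Y {u, w}) (hZuw : Disjoint Z {u, w}) :
    F (insert u Y) - F (insert w Y) = F (insert u Z) - F (insert w Z) := by
  obtain rfl | huw := eq_or_ne u w
  · simp
  have hD : Disjoint (Y ∪ Z) {u, w} := disjoint_union_left.2 ⟨hYuw, hZuw⟩
  refine eq_of_forall_insert_eq_insert (D := Y ∪ Z) (j := k - 1)
    (φ := fun X ↦ F (insert u X) - F (insert w X)) (fun X hX hXk a ha b hb ↦ ?_)
    subset_union_left subset_union_right (by lia) (by lia)
  rw [mem_sdiff] at ha hb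
  refine h (by lia) huw (disjoint_left.1 hD ha.1) (disjoint_left.1 hD hb.1) ?_
  have hXuw : Disjoint X {u, w} := hD.mono_left hX
  simp only [disjoint_insert_right, disjoint_singleton_right] at hXuw ⊢
  exact ⟨hXuw.1, hXuw.2, ha.2, hb.2⟩

variable [Fintype α]

/- The potential is the first difference against a base point `o`; comparing two elements `a` and
`b` through `o` takes a set avoiding all three, hence the bound on the cardinality. -/
lemma exists_potential (h : MixedDifferencesVanish k F) (hk : 0 < k)
    (hα : k + 2 ≤ Fintype.card α) :
    ∃ d : α → M, ∀ a b Y, #Y + 1 = k → a ∉ Y → b ∉ Y →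
      F (insert a Y) - F (insert b Y) = d a - d b := by
  obtain ⟨o⟩ : Nonempty α := Fintype.card_pos_iff.1 (by lia)
  have havoid : ∀ u : α, ∃ Z : Finset α, Disjoint Z {u, o} ∧ #Z = k - 1 := fun u ↦
    exists_disjoint_card_eq (by have := card_le_two (a := u) (b := o); lia)
  choose Z hZo hZ using havoid
  refine ⟨fun u ↦ F (insert u (Z u)) - F (insert o (Z u)), fun a b Y hY ha hb ↦ ?_⟩
  obtain ⟨X, hXabo, hX⟩ := exists_disjoint_card_eq (B := {a, b, o}) (j := k - 1)
    (by have := card_le_three (a := a) (b := b) (c := o); lia)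
  have hYX := h.sub_eq_sub hY (Z := X) (u := a) (w := b) (by lia) (by simp [ha, hb])
    (disjoint_of_subset_right (by grind) hXabo)
  have hZXa := h.sub_eq_sub (Y := Z a) (Z := X) (by have := hZ a; lia) (by lia) (hZo a)
    (disjoint_of_subset_right (by grind) hXabo)
  have hZXb := h.sub_eq_sub (Y := Z b) (Z := X) (by have := hZ b; lia) (by lia) (hZo b)
    (disjoint_of_subset_right (by grind) hXabo)
  simp only [hYX, hZXa, hZXb, sub_sub_sub_cancel_right]

lemma exists_eq_sum {K : Type*} [Field K] [CharZero K] {F : Finset α → K}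
    (h : MixedDifferencesVanish k F) (hk : 0 < k) (hα : k + 2 ≤ Fintype.card α) :
    ∃ a : α → K, ∀ X, #X = k → F X = ∑ i ∈ X, a i := by
  obtain ⟨d, hd⟩ := h.exists_potential hk hα
  obtain ⟨X₀, -, hX₀⟩ := exists_subset_card_eq (show k ≤ #(univ : Finset α) by
    rw [card_univ]; lia)
  set c := F X₀ - ∑ i ∈ X₀, d i
  have hconst : ∀ X, #X = k → F X - ∑ i ∈ X, d i = c := fun X hX ↦
    eq_of_forall_insert_eq_insert (D := univ) (φ := fun X ↦ F X - ∑ i ∈ X, d i)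
      (fun Y _ hY a ha b hb ↦ by
        rw [mem_sdiff] at ha hb
        rw [sum_insert ha.2, sum_insert hb.2]
        linear_combination hd a b Y hY ha.2 hb.2)
      (subset_univ X) (subset_univ X₀) hX hX₀
  have hk0 : (k : K) ≠ 0 := Nat.cast_ne_zero.2 hk.ne'
  refine ⟨fun i ↦ d i + c / k, fun X hX ↦ ?_⟩
  rw [sum_add_distrib, sum_const, hX, nsmul_eq_mul, mul_div_cancel₀ _ hk0, ← hconst X hX,
    add_sub_cancel]

end MixedDifferencesVanish

end MixedDifferences

section Kernel

variable {α K : Type*} [DecidableEq α] [Fintype α] [Field K] [CharZero K] {k n : ℕ}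

theorem sum_transversals_eq_zero_iff {F : Finset α → K} (hk : 0 < k) (hn : 3 ≤ n)
    (hα : Fintype.card α = k * n) :
    (∀ P, IsPacking univ k n P → ∑ X ∈ transversals P, F X = 0) ↔
      ∃ a : α → K, ∑ i, a i = 0 ∧ ∀ X, #X = k → F X = ∑ i ∈ X, a i := by
  have hn0 : (n : K) ≠ 0 := Nat.cast_ne_zero.2 (by lia)
  have hsum : ∀ a : α → K, (∀ X, #X = k → F X = ∑ i ∈ X, a i) → ∀ P, IsPacking univ k n P →
      n * ∑ X ∈ transversals P, F X = n ^ k * ∑ i, a i := by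
    intro a ha P hP
    have hPk : ∀ X ∈ transversals P, #X = k := fun X hX ↦
      (card_of_mem_transversals hP.pairwiseDisjoint hX).trans hP.card_eq
    rw [sum_congr rfl fun X hX ↦ ha X (hPk X hX),
      sum_transversals_sum hP.pairwiseDisjoint hP.card_of_mem, hP.card_eq,
      hP.biUnion_eq (card_univ.trans hα)]
  constructor
  · intro hF
    have hkn : k + 2 ≤ Fintype.card α := by
      rw [hα]
      nlinarith
    obtain ⟨a, ha⟩ := (mixedDifferencesVanish_of_sum_transversals_eq_zero hn hα hF).exists_eq_sum
      hk hkn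
    obtain ⟨P, hP⟩ := exists_isPacking (E := (univ : Finset α)) (j := k) (n := n) (by lia)
      (card_univ.trans hα).ge
    have hPa := hsum a ha P hP
    rw [hF P hP, mul_zero, eq_comm] at hPa
    exact ⟨a, (mul_eq_zero.1 hPa).resolve_left (pow_ne_zero k hn0), ha⟩
  · rintro ⟨a, ha0, ha⟩ P hP
    have hPa := hsum a ha P hP
    rw [ha0, mul_zero] at hPa
    exact (mul_eq_zero.1 hPa).resolve_left hn0

end Kernel

section SubsetSum

variable (α K : Type*) [Ring K] (k : ℕ)

/-- The linear map taking a weight function on points to the weights of the `k`-element sets. -/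
def subsetSum : (α → K) →ₗ[K] ({S : Finset α // #S = k} → K) :=
  LinearMap.pi fun X ↦ ∑ i ∈ X.1, LinearMap.proj i

variable {α K k}

lemma subsetSum_apply (a : α → K) (X : {S : Finset α // #S = k}) :
    subsetSum α K k a X = ∑ i ∈ X.1, a i := by
  simp [subsetSum]

lemma subsetSum_injective [Fintype α] [IsAddTorsionFree K] (hk : 0 < k) (hα : k < Fintype.card α) :
    Function.Injective (subsetSum α K k) := by
  refine LinearMap.ker_eq_bot.1 (LinearMap.ker_eq_bot'.2 fun a ha ↦ funext fun x ↦ ?_)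
  refine eq_zero_of_sum_eq_zero_of_card_eq hk (by rwa [card_univ]) (fun V _ hV ↦ ?_) (mem_univ x)
  rw [← subsetSum_apply a ⟨V, hV⟩, ha, Pi.zero_apply]

lemma finrank_ker_sum_proj {ι K : Type*} [Fintype ι] [Nonempty ι] [Field K] :
    Module.finrank K (LinearMap.ker (∑ i, LinearMap.proj i : (ι → K) →ₗ[K] K)) + 1 =
      Fintype.card ι := by
  have hne : (∑ i, LinearMap.proj i : Module.Dual K (ι → K)) ≠ 0 := fun h ↦ by
    obtain ⟨i⟩ := ‹Nonempty ι›
    simpa using LinearMap.congr_fun h (Pi.single i 1)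
  rw [Module.Dual.finrank_ker_add_one_of_ne_zero hne, Module.finrank_fintype_fun_eq_card]

end SubsetSum

section CutMatrix

variable {t k : ℕ}

lemma isPacking_balancedPartition (P : BalancedPartition t k) :
    IsPacking univ k (t / k) P.1 where
  card_eq := P.2.1
  card_of_mem := P.2.2.1
  pairwiseDisjoint _ hV _ hW hVW := disjoint_left.2 fun x hxV hxW ↦
    hVW ((P.2.2.2 x).unique ⟨hV, hxV⟩ ⟨hW, hxW⟩)
  biUnion_subset := subset_univ _

lemma biUnion_balancedPartition (P : BalancedPartition t k) : P.1.biUnion id = univ :=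
  eq_univ_of_forall fun x ↦ mem_biUnion.2 (P.2.2.2 x).exists

lemma IsPacking.exists_balancedPartition (hkt : k ∣ t) {P : Finset (Finset (Fin t))}
    (hP : IsPacking univ k (t / k) P) : ∃ Q : BalancedPartition t k, Q.1 = P := by
  refine ⟨⟨P, hP.card_eq, hP.card_of_mem, fun x ↦ ?_⟩, rfl⟩
  have hx : x ∈ P.biUnion id := by
    rw [hP.biUnion_eq (by rw [card_univ, Fintype.card_fin, Nat.mul_div_cancel' hkt])]
    exact mem_univ x
  obtain ⟨V, hV, hxV⟩ := mem_biUnion.1 hx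
  exact ⟨V, ⟨hV, hxV⟩, fun W hW ↦ hP.pairwiseDisjoint.elim_finset hW.1 hV x hW.2 hxV⟩

lemma cutMatrix_mulVec (P : BalancedPartition t k) (F : Finset (Fin t) → ℚ) :
    (cutMatrix t k).mulVec (fun X ↦ F X.1) P = ∑ X ∈ transversals P.1, F X := by
  have hP := isPacking_balancedPartition P
  have hfilter : {X ∈ powersetCard k (univ : Finset (Fin t)) | ∀ V ∈ P.1, #(X ∩ V) = 1} =
      transversals P.1 := by
    ext X
    rw [mem_filter, mem_powersetCard_univ]
    refine ⟨fun hX ↦ mem_transversals.2 ⟨?_, hX.2⟩, fun hX ↦ ⟨?_, (mem_transversals.1 hX).2⟩⟩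
    · rw [biUnion_balancedPartition P]
      exact subset_univ X
    · rw [card_of_mem_transversals hP.pairwiseDisjoint hX, hP.card_eq]
  calc (cutMatrix t k).mulVec (fun X ↦ F X.1) P
      = ∑ X ∈ powersetCard k univ, (if ∀ V ∈ P.1, #(X ∩ V) = 1 then 1 else 0) * F X := by
        rw [Matrix.mulVec, dotProduct,
          sum_subtype (powersetCard k univ) (p := fun X ↦ #X = k) fun X ↦ mem_powersetCard_univ]
        exact sum_congr rfl fun X _ ↦ by simp only [cutMatrix]
    _ = ∑ X ∈ transversals P.1, F X := by
        simp only [ite_mul, one_mul, zero_mul, ← sum_filter, hfilter]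

theorem ker_cutMatrix (hk : 0 < k) (ht : 3 * k ≤ t) (hkt : k ∣ t) :
    LinearMap.ker (cutMatrix t k).mulVecLin =
      (LinearMap.ker (∑ i, LinearMap.proj i : (Fin t → ℚ) →ₗ[ℚ] ℚ)).map
        (subsetSum (Fin t) ℚ k) := by
  ext f
  obtain ⟨F, rfl⟩ : ∃ F : Finset (Fin t) → ℚ, (fun X ↦ F X.1) = f :=
    ⟨Function.extend Subtype.val f 0, funext fun X ↦ Subtype.val_injective.extend_apply f 0 X⟩
  calc (fun X ↦ F X.1) ∈ LinearMap.ker (cutMatrix t k).mulVecLin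
    _ ↔ ∀ P : BalancedPartition t k, ∑ X ∈ transversals P.1, F X = 0 := by
        simp only [LinearMap.mem_ker, Matrix.mulVecLin_apply, funext_iff, cutMatrix_mulVec,
          Pi.zero_apply]
    _ ↔ ∀ P, IsPacking univ k (t / k) P → ∑ X ∈ transversals P, F X = 0 := by
        refine ⟨fun h P hP ↦ ?_, fun h P ↦ h P.1 (isPacking_balancedPartition P)⟩
        obtain ⟨Q, rfl⟩ := hP.exists_balancedPartition hkt
        exact h Q
    _ ↔ ∃ a : Fin t → ℚ, ∑ i, a i = 0 ∧ ∀ X, #X = k → F X = ∑ i ∈ X, a i :=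
        sum_transversals_eq_zero_iff hk ((Nat.le_div_iff_mul_le hk).2 ht)
          (by rw [Fintype.card_fin, Nat.mul_div_cancel' hkt])
    _ ↔ _ := by
        simp [Submodule.mem_map, funext_iff, subsetSum_apply, eq_comm]

end CutMatrix

end BalancedCut

theorem balanced_cut_matrix_rank_general {t k : ℕ} (hk : 0 < k) (ht : 3 * k ≤ t) (hkt : k ∣ t) :
    (cutMatrix t k).rank = t.choose k - t + 1 := by
  have : NeZero t := ⟨by lia⟩
  have hinj : Function.Injective (BalancedCut.subsetSum (Fin t) ℚ k) :=
    BalancedCut.subsetSum_injective hk (by rw [Fintype.card_fin]; lia)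
  have hdom : Module.finrank ℚ ({S : Finset (Fin t) // S.card = k} → ℚ) = t.choose k := by
    rw [Module.finrank_fintype_fun_eq_card, Fintype.card_finset_len, Fintype.card_fin]
  have hle : t ≤ t.choose k := by
    simpa [hdom] using LinearMap.finrank_le_finrank_of_injective hinj
  have hker : Module.finrank ℚ (LinearMap.ker (cutMatrix t k).mulVecLin) + 1 = t := by
    rw [BalancedCut.ker_cutMatrix hk ht hkt,
      ← (Submodule.equivMapOfInjective _ hinj _).finrank_eq, BalancedCut.finrank_ker_sum_proj,
      Fintype.card_fin]
  have hrank : (cutMatrix t k).rank + Module.finrank ℚ (LinearMap.ker (cutMatrix t k).mulVecLin) =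
      t.choose k :=
    (LinearMap.finrank_range_add_finrank_ker _).trans hdom
  lia

/-- The balanced case of Theorem 4.1: for every `k ≥ 2` and all sufficiently large `t`
divisible by `k`, the balanced-cut intersection matrix has rank `C(t,k) - t + 1`. -/
theorem balanced_cut_matrix_rank (k : ℕ) (hk : 2 ≤ k) :
    ∃ t₀ : ℕ, ∀ t : ℕ, t₀ ≤ t → k ∣ t →
      (cutMatrix t k).rank = t.choose k - t + 1 :=
  ⟨3 * k, fun _ ht hkt ↦ balanced_cut_matrix_rank_general (by lia) ht hkt⟩
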